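/- Let C be a 2-reduced dg coalgebra over ℚ and t : C ⇝ ΩC its universal twisting chain. Regarding ΩC as a left module over itself, the twisted coextension C ⊗^t ΩC is acyclic: the map ℚ → C ⊗^t ΩC sending 1 ↦ 1 ⊗ 1 is a quasi-isomorphism of chain complexes (in fact a chain deformation retraction onto its image). -/

import Mathlib

open scoped TensorProduct

noncomputable section

/-- A homologically graded differential graded `ℚ`-vector space (chain complex of
`ℚ`-vector spaces presented as a graded module with a degree `-1` square-zero differential). -/
structure DGVect : Type 1 where
  carrier : Type
  [isAddCommGroup : AddCommGroup carrier]
  [isModule : Module ℚ carrier]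
  grading : ℤ → Submodule ℚ carrier
  [isDecomp : DirectSum.Decomposition grading]
  d : carrier →ₗ[ℚ] carrier
  d_mem : ∀ (n : ℤ), ∀ x ∈ grading n, d x ∈ grading (n - 1)
  d_sq : d.comp d = 0

attribute [instance] DGVect.isAddCommGroup DGVect.isModule DGVect.isDecomp

/-- The operator acting on the degree `n` graded component by `(-1)^(k*n)`. -/
def signOpOf {V : Type} [AddCommGroup V] [Module ℚ V] (g : ℤ → Submodule ℚ V)
    [DirectSum.Decomposition g] (k : ℤ) : V →ₗ[ℚ] V :=
  (DirectSum.toModule ℚ ℤ V fun n => ((-1 : ℚ) ^ (k * n)) • (g n).subtype).comp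
    (DirectSum.decomposeLinearEquiv g).toLinearMap

/-- The Koszul parity operator, acting by `(-1)^n` in degree `n`. -/
def parityOf {V : Type} [AddCommGroup V] [Module ℚ V] (g : ℤ → Submodule ℚ V)
    [DirectSum.Decomposition g] : V →ₗ[ℚ] V := signOpOf g 1

def DGVect.parity (V : DGVect) : V.carrier →ₗ[ℚ] V.carrier := parityOf V.grading

/-- A graded object is bounded below if it vanishes in all sufficiently negative degrees. -/
def DGVect.BoundedBelow (V : DGVect) : Prop := ∃ b : ℤ, ∀ n : ℤ, n < b → V.grading n = ⊥

/-- The Koszul signed braiding `v ⊗ w ↦ (-1)^{|v||w|} w ⊗ v` of graded vector spaces. -/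
def kSwapOf {V W : Type} [AddCommGroup V] [Module ℚ V] [AddCommGroup W] [Module ℚ W]
    (gV : ℤ → Submodule ℚ V) (gW : ℤ → Submodule ℚ W)
    [DirectSum.Decomposition gV] [DirectSum.Decomposition gW] :
    V ⊗[ℚ] W →ₗ[ℚ] W ⊗[ℚ] V :=
  TensorProduct.lift
    ((DirectSum.toModule ℚ ℤ (W →ₗ[ℚ] W ⊗[ℚ] V) (fun i =>
        (((DirectSum.toModule ℚ ℤ (V →ₗ[ℚ] W ⊗[ℚ] V) (fun j =>
              ((-1 : ℚ) ^ (i * j)) • ((TensorProduct.mk ℚ W V).comp (gW j).subtype))).comp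
            (DirectSum.decomposeLinearEquiv gW).toLinearMap).flip).comp
          (gV i).subtype)).comp
      (DirectSum.decomposeLinearEquiv gV).toLinearMap)

/-- The degree `n` part of the tensor product grading:
the span of the homogeneous tensors of total degree `n`. -/
def tensorGrading {V W : Type} [AddCommGroup V] [Module ℚ V] [AddCommGroup W] [Module ℚ W]
    (gV : ℤ → Submodule ℚ V) (gW : ℤ → Submodule ℚ W) (n : ℤ) : Submodule ℚ (V ⊗[ℚ] W) :=
  ⨆ p : {p : ℤ × ℤ // p.1 + p.2 = n},
    LinearMap.range (TensorProduct.map (gV p.1.1).subtype (gW p.1.2).subtype)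

/-- `f` is a quasi-isomorphism from the complex `(V, dV)` to the complex `(W, dW)`:
it induces a bijection on homology (`ker d / im d`). -/
def IsQuasiIso {V W : Type} [AddCommGroup V] [Module ℚ V] [AddCommGroup W] [Module ℚ W]
    (dV : V →ₗ[ℚ] V) (dW : W →ₗ[ℚ] W) (f : V →ₗ[ℚ] W) : Prop :=
  (∀ x : V, dV x = 0 → (∃ y, f x = dW y) → ∃ z, x = dV z) ∧
  (∀ w : W, dW w = 0 → ∃ x, dV x = 0 ∧ ∃ y, w - f x = dW y)

/-- A differential graded algebra over `ℚ`. -/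
structure DGAlgebra extends DGVect where
  mul : carrier →ₗ[ℚ] carrier →ₗ[ℚ] carrier
  one : carrier
  one_mem : one ∈ grading 0
  mul_mem : ∀ (i j : ℤ) (x y : carrier), x ∈ grading i → y ∈ grading j →
    mul x y ∈ grading (i + j)
  mul_assoc' : ∀ x y z : carrier, mul (mul x y) z = mul x (mul y z)
  one_mul' : ∀ x : carrier, mul one x = x
  mul_one' : ∀ x : carrier, mul x one = x
  leibniz : ∀ (i : ℤ) (x y : carrier), x ∈ grading i →
    d (mul x y) = mul (d x) y + ((-1 : ℚ) ^ i) • mul x (d y)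

/-- The multiplication of a dg algebra as a map out of the tensor product. -/
def DGAlgebra.mulMap (A : DGAlgebra) : A.carrier ⊗[ℚ] A.carrier →ₗ[ℚ] A.carrier :=
  TensorProduct.lift A.mul

/-- A dg algebra is connective if it is concentrated in non-negative degrees. -/
def DGAlgebra.Connective (A : DGAlgebra) : Prop := ∀ n : ℤ, n < 0 → A.grading n = ⊥

/-- A (coassociative counital) differential graded coalgebra over `ℚ`,
non-negatively graded. -/
structure DGCoalgebra extends DGVect where
  comul : carrier →ₗ[ℚ] carrier ⊗[ℚ] carrier
  counit : carrier →ₗ[ℚ] ℚ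
  nonneg : ∀ n : ℤ, n < 0 → grading n = ⊥
  comul_mem : ∀ (n : ℤ), ∀ x ∈ grading n, comul x ∈ tensorGrading grading grading n
  counit_zero : ∀ (n : ℤ), n ≠ 0 → ∀ x ∈ grading n, counit x = 0
  coassoc : (TensorProduct.assoc ℚ carrier carrier carrier).toLinearMap.comp
      ((TensorProduct.map comul LinearMap.id).comp comul)
      = (TensorProduct.map LinearMap.id comul).comp comul
  counit_comul_left : (TensorProduct.lid ℚ carrier).toLinearMap.comp
      ((TensorProduct.map counit LinearMap.id).comp comul) = LinearMap.id
  counit_comul_right : (TensorProduct.rid ℚ carrier).toLinearMap.comp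
      ((TensorProduct.map LinearMap.id counit).comp comul) = LinearMap.id
  comul_chain : comul.comp d
      = (TensorProduct.map d LinearMap.id + TensorProduct.map (parityOf grading) d).comp comul
  counit_chain : counit.comp d = 0

/-- Cocommutativity: the comultiplication is invariant under the Koszul signed twist. -/
def DGCoalgebra.Cocomm (C : DGCoalgebra) : Prop :=
  (kSwapOf C.grading C.grading).comp C.comul = C.comul

/-- A coaugmented dg coalgebra: a dg coalgebra with a coaugmentation `η : ℚ → C`,
recorded by the grouplike element `one = η 1` in degree `0`. -/
structure CoaugDGCoalgebra extends DGCoalgebra where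
  one : carrier
  one_mem : one ∈ grading 0
  counit_one : counit one = 1
  comul_one : comul one = one ⊗ₜ[ℚ] one

/-- A coaugmented dg coalgebra is 2-reduced if `C₀ = ℚ` (spanned by the coaugmentation)
and `C₁ = 0`. -/
def CoaugDGCoalgebra.TwoReduced (C : CoaugDGCoalgebra) : Prop :=
  C.grading 0 = Submodule.span ℚ {C.one} ∧ C.grading 1 = ⊥

/-- A twisting chain `τ : C ⇝ A`: a degree `-1` linear map satisfying
`d(τc) = -τ(dc) - (-1)^{|c₍₀₎|} τ(c₍₀₎)·τ(c₍₁₎)`. -/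
structure TwistingChain (C : DGCoalgebra) (A : DGAlgebra) where
  toFun : C.carrier →ₗ[ℚ] A.carrier
  mem : ∀ (n : ℤ), ∀ x ∈ C.grading n, toFun x ∈ A.grading (n - 1)
  twist : A.d.comp toFun + toFun.comp C.d
      + A.mulMap.comp ((TensorProduct.map (toFun.comp (parityOf C.grading)) toFun).comp C.comul)
      = 0

/-- A left dg module over a dg algebra. -/
structure DGModule (A : DGAlgebra) extends DGVect where
  smul : A.carrier →ₗ[ℚ] carrier →ₗ[ℚ] carrier
  smul_mem : ∀ (i j : ℤ) (a : A.carrier) (x : carrier), a ∈ A.grading i → x ∈ grading j →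
    smul a x ∈ grading (i + j)
  one_smul' : ∀ x : carrier, smul A.one x = x
  mul_smul' : ∀ (a b : A.carrier) (x : carrier), smul (A.mul a b) x = smul a (smul b x)
  leibniz : ∀ (i : ℤ) (a : A.carrier) (x : carrier), a ∈ A.grading i →
    d (smul a x) = smul (A.d a) x + ((-1 : ℚ) ^ i) • smul a (d x)

/-- The action of a dg module as a map out of the tensor product. -/
def DGModule.actionMap {A : DGAlgebra} (M : DGModule A) :
    A.carrier ⊗[ℚ] M.carrier →ₗ[ℚ] M.carrier := TensorProduct.lift M.smul

/-- A left dg comodule over a dg coalgebra. -/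
structure DGComodule (C : DGCoalgebra) extends DGVect where
  coact : carrier →ₗ[ℚ] C.carrier ⊗[ℚ] carrier
  coact_mem : ∀ (n : ℤ), ∀ x ∈ grading n, coact x ∈ tensorGrading C.grading grading n
  coassoc : (TensorProduct.assoc ℚ C.carrier C.carrier carrier).toLinearMap.comp
      ((TensorProduct.map C.comul LinearMap.id).comp coact)
      = (TensorProduct.map LinearMap.id coact).comp coact
  counit_coact : (TensorProduct.lid ℚ carrier).toLinearMap.comp
      ((TensorProduct.map C.counit LinearMap.id).comp coact) = LinearMap.id
  coact_chain : coact.comp d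
      = (TensorProduct.map C.d LinearMap.id + TensorProduct.map (parityOf C.grading) d).comp coact

/-- Morphisms of dg modules: degree `0` graded chain maps commuting with the action. -/
def IsModuleHom (A : DGAlgebra) (M M' : DGModule A)
    (g : M.carrier →ₗ[ℚ] M'.carrier) : Prop :=
  (∀ (n : ℤ), ∀ x ∈ M.grading n, g x ∈ M'.grading n) ∧
  g.comp M.d = M'.d.comp g ∧
  g.comp M.actionMap = M'.actionMap.comp (TensorProduct.map LinearMap.id g)

/-- Morphisms of dg comodules: degree `0` graded chain maps commuting with the coaction. -/
def IsComoduleHom (C : DGCoalgebra) (N N' : DGComodule C)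
    (f : N.carrier →ₗ[ℚ] N'.carrier) : Prop :=
  (∀ (n : ℤ), ∀ x ∈ N.grading n, f x ∈ N'.grading n) ∧
  f.comp N.d = N'.d.comp f ∧
  (TensorProduct.map LinearMap.id f).comp N.coact = N'.coact.comp f

/-- The `A`-action on a twisted extension `A ⊗_τ N`: multiplication on the first factor. -/
def extAction (A : DGAlgebra) (N : Type) [AddCommGroup N] [Module ℚ N] :
    A.carrier ⊗[ℚ] (A.carrier ⊗[ℚ] N) →ₗ[ℚ] A.carrier ⊗[ℚ] N :=
  (TensorProduct.map A.mulMap LinearMap.id).comp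
    (TensorProduct.assoc ℚ A.carrier A.carrier N).symm.toLinearMap

/-- The differential of the twisted extension `A ⊗_τ N`:
`d(a ⊗ n) = da ⊗ n + (-1)^{|a|} a ⊗ dn - (-1)^{|a|} a·τ(n₍₀₎) ⊗ n₍₁₎`
for a `C`-comodule `(N, dN, ρ)`. -/
def extDiff (C : DGCoalgebra) (A : DGAlgebra) (τ : TwistingChain C A)
    (N : Type) [AddCommGroup N] [Module ℚ N]
    (dN : N →ₗ[ℚ] N) (ρ : N →ₗ[ℚ] C.carrier ⊗[ℚ] N) :
    A.carrier ⊗[ℚ] N →ₗ[ℚ] A.carrier ⊗[ℚ] N :=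
  TensorProduct.map A.d LinearMap.id + TensorProduct.map (parityOf A.grading) dN
    - (TensorProduct.map
        (A.mulMap.comp (TensorProduct.map (parityOf A.grading) τ.toFun)) LinearMap.id).comp
        ((TensorProduct.assoc ℚ A.carrier C.carrier N).symm.toLinearMap.comp
          (TensorProduct.map LinearMap.id ρ))

/-- The `C`-coaction on a twisted coextension `C ⊗^τ M`, namely `Δ ⊗ id`. -/
def coextCoact (C : DGCoalgebra) (M : Type) [AddCommGroup M] [Module ℚ M] :
    C.carrier ⊗[ℚ] M →ₗ[ℚ] C.carrier ⊗[ℚ] (C.carrier ⊗[ℚ] M) :=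
  (TensorProduct.assoc ℚ C.carrier C.carrier M).toLinearMap.comp
    (TensorProduct.map C.comul LinearMap.id)

/-- The differential of the twisted coextension `C ⊗^τ M`, expressed in terms of the map
`tact : C ⊗ M → M`, `c ⊗ m ↦ τ(c)·m`:
`d(c ⊗ m) = dc ⊗ m + (-1)^{|c|} c ⊗ dm + (-1)^{|c₍₀₎|} c₍₀₎ ⊗ τ(c₍₁₎)·m`. -/
def coextDiffFrom (C : DGCoalgebra) (M : Type) [AddCommGroup M] [Module ℚ M]
    (dM : M →ₗ[ℚ] M) (tact : C.carrier ⊗[ℚ] M →ₗ[ℚ] M) :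
    C.carrier ⊗[ℚ] M →ₗ[ℚ] C.carrier ⊗[ℚ] M :=
  TensorProduct.map C.d LinearMap.id + TensorProduct.map (parityOf C.grading) dM
    + (TensorProduct.map (parityOf C.grading) tact).comp (coextCoact C M)

/-- The differential of the twisted coextension `C ⊗^τ M` of an `A`-module `(M, dM, act)`. -/
def coextDiff (C : DGCoalgebra) (A : DGAlgebra) (τ : TwistingChain C A)
    (M : Type) [AddCommGroup M] [Module ℚ M]
    (dM : M →ₗ[ℚ] M) (act : A.carrier ⊗[ℚ] M →ₗ[ℚ] M) :
    C.carrier ⊗[ℚ] M →ₗ[ℚ] C.carrier ⊗[ℚ] M :=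
  coextDiffFrom C M dM (act.comp (TensorProduct.map τ.toFun LinearMap.id))

/-- Morphisms of dg algebras. -/
structure DGAlgebraHom (A B : DGAlgebra) where
  toLinearMap : A.carrier →ₗ[ℚ] B.carrier
  mem : ∀ (n : ℤ), ∀ x ∈ A.grading n, toLinearMap x ∈ B.grading n
  chain : toLinearMap.comp A.d = B.d.comp toLinearMap
  map_one : toLinearMap A.one = B.one
  map_mul : ∀ x y : A.carrier, toLinearMap (A.mul x y) = B.mul (toLinearMap x) (toLinearMap y)

/-- Data exhibiting a dg algebra as the cobar construction `ΩC` of a coaugmented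
dg coalgebra `C`, via the universal twisting chain `t : C ⇝ ΩC`:
dg algebra maps `ΩC → A` correspond bijectively to twisting chains `C ⇝ A`
vanishing on the coaugmentation. -/
structure CobarData (C : CoaugDGCoalgebra) where
  alg : DGAlgebra
  t : TwistingChain C.toDGCoalgebra alg
  t_one : t.toFun C.one = 0
  univ : ∀ (A : DGAlgebra) (τ : TwistingChain C.toDGCoalgebra A), τ.toFun C.one = 0 →
    ∃! F : DGAlgebraHom alg A, F.toLinearMap.comp t.toFun = τ.toFun

/-- A morphism of `C`-comodules is a `t`-equivalence if the induced morphism of twisted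
extensions `ΩC ⊗_t N → ΩC ⊗_t M` is a quasi-isomorphism. -/
def IsTEquiv (C : CoaugDGCoalgebra) (Ω : CobarData C) (N M : DGComodule C.toDGCoalgebra)
    (f : N.carrier →ₗ[ℚ] M.carrier) : Prop :=
  IsQuasiIso (extDiff C.toDGCoalgebra Ω.alg Ω.t N.carrier N.d N.coact)
    (extDiff C.toDGCoalgebra Ω.alg Ω.t M.carrier M.d M.coact)
    (TensorProduct.map LinearMap.id f)

/-!
Right multiplication makes `M = C ⊗^t ΩC` a right dg module over `ΩC` with the cycle `z = 1 ⊗ 1`,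
and the zero twisting chain induces an augmentation `ε` of `ΩC` killing `t`; write `ε` for the
counit of `C` too. Dg algebra maps `a ↦ (a, σ(a))` from `ΩC` to the square-zero extension of `ΩC`
by `M[1]`, with `ΩC` acting on the left of `M` through `ε` and with differential twisted by the
inner derivation of `z`, amount to maps `σ` satisfying `σ(ab) = ε(a)σ(b) + σ(a)b` and
`dσ(a) + σ(da) = z·a - ε(a)z`. The universal property of `ΩC` provides one with
`σ(t(c)) = c ⊗ 1 - ε(c) 1 ⊗ 1`, hence `σ(t(c)a) = c ⊗ a - ε(c) 1 ⊗ a`, and then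
`s(c ⊗ a) = ε(c)σ(a)` contracts `M` onto `ℚ·z`.
-/

section Gradings

open DirectSum

section IsInternal

variable {R M N : Type*} [Ring R] [AddCommGroup M] [Module R M] [AddCommGroup N] [Module R N]
  {ι : Type*} [DecidableEq ι]

lemma isInternal_of_leftInverse {g : ι → Submodule R M} (dec : M →ₗ[R] ⨁ i, g i)
    (hdec : coeLinearMap g ∘ₗ dec = LinearMap.id)
    (hmem : ∀ i, ∀ x ∈ g i, dec x ∈ LinearMap.range (lof R ι (fun i => g i) i)) :
    IsInternal g := by
  have hcoe : dec ∘ₗ coeLinearMap g = LinearMap.id := by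
    ext i x : 2
    obtain ⟨y, hy⟩ := hmem i x x.2
    have hyx : (y : M) = x := by
      simpa [← hy] using LinearMap.congr_fun hdec (x : M)
    simp [← hy, Subtype.ext hyx]
  exact ⟨Function.LeftInverse.injective (LinearMap.congr_fun hcoe),
    Function.RightInverse.surjective (LinearMap.congr_fun hdec)⟩

lemma isInternal_prod (gM : ι → Submodule R M) (gN : ι → Submodule R N)
    [Decomposition gM] [Decomposition gN] : IsInternal fun i => (gM i).prod (gN i) := by
  let inl (i : ι) : gM i →ₗ[R] (gM i).prod (gN i) :=
    (LinearMap.inl R M N).restrict fun x hx => ⟨hx, zero_mem _⟩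
  let inr (i : ι) : gN i →ₗ[R] (gM i).prod (gN i) :=
    (LinearMap.inr R M N).restrict fun y hy => ⟨zero_mem _, hy⟩
  refine isInternal_of_leftInverse
    (LinearMap.coprod (lmap inl ∘ₗ decomposeLinearEquiv gM)
      (lmap inr ∘ₗ decomposeLinearEquiv gN))
    (LinearMap.prod_ext (decompose_lhom_ext gM fun i => ?_)
      (decompose_lhom_ext gN fun i => ?_)) ?_
  · ext x : 1
    simp [inl, LinearMap.restrict]
  · ext y : 1
    simp [inr, LinearMap.restrict]
  · rintro i ⟨x, y⟩ ⟨hx : x ∈ gM i, hy : y ∈ gN i⟩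
    lift x to gM i using hx
    lift y to gN i using hy
    exact ⟨inl i x + inr i y, by simp⟩

lemma isInternal_comp_equiv {κ : Type*} [DecidableEq κ] {g : ι → Submodule R M}
    (hg : IsInternal g) (e : κ ≃ ι) : IsInternal (g ∘ e) := by
  rw [isInternal_submodule_iff_iSupIndep_and_iSup_eq_top] at hg ⊢
  exact ⟨hg.1.comp e.injective, (e.iSup_comp (g := g)).trans hg.2⟩

lemma isInternal_single (i : ι) : IsInternal (Pi.single i ⊤ : ι → Submodule R M) := by
  rw [isInternal_submodule_iff_iSupIndep_and_iSup_eq_top]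
  refine ⟨fun j => ?_, eq_top_iff.2 (le_iSup_of_le i (by simp))⟩
  rcases eq_or_ne j i with rfl | hj
  · simp +contextual [Pi.single_eq_of_ne]
  · simp [Pi.single_eq_of_ne hj]

end IsInternal

variable {V W : Type} [AddCommGroup V] [Module ℚ V] [AddCommGroup W] [Module ℚ W]
  (gV : ℤ → Submodule ℚ V) (gW : ℤ → Submodule ℚ W)

variable {gV gW} in
lemma tmul_mem_tensorGrading {i j n : ℤ} {x : V} {y : W} (hx : x ∈ gV i) (hy : y ∈ gW j)
    (hn : i + j = n) : x ⊗ₜ[ℚ] y ∈ tensorGrading gV gW n :=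
  Submodule.mem_iSup_of_mem ⟨(i, j), hn⟩ ⟨⟨x, hx⟩ ⊗ₜ ⟨y, hy⟩, rfl⟩

variable {gV gW} in
lemma tensorGrading_le {n : ℤ} {p : Submodule ℚ (V ⊗[ℚ] W)}
    (hp : ∀ i j, i + j = n → ∀ x ∈ gV i, ∀ y ∈ gW j, x ⊗ₜ[ℚ] y ∈ p) :
    tensorGrading gV gW n ≤ p := by
  refine iSup_le fun ij => ?_
  rw [TensorProduct.range_map_eq_span_tmul, Submodule.span_le]
  rintro _ ⟨x, y, rfl⟩
  exact hp _ _ ij.2 x x.2 y y.2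

section Decomposition

variable [Decomposition gV] [Decomposition gW]

lemma isInternal_tensorGrading : IsInternal (tensorGrading gV gW) := by
  let incl (p : ℤ × ℤ) : gV p.1 ⊗[ℚ] gW p.2 →ₗ[ℚ] tensorGrading gV gW (p.1 + p.2) :=
    (TensorProduct.map (gV p.1).subtype (gW p.2).subtype).codRestrict _ fun z =>
      Submodule.mem_iSup_of_mem ⟨p, rfl⟩ ⟨z, rfl⟩
  let dec : V ⊗[ℚ] W →ₗ[ℚ] ⨁ n, tensorGrading gV gW n :=
    toModule ℚ (ℤ × ℤ) _ (fun p => lof ℚ ℤ (fun n => tensorGrading gV gW n) _ ∘ₗ incl p) ∘ₗ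
      (TensorProduct.directSum ℚ ℚ (fun i => gV i) (fun j => gW j)).toLinearMap ∘ₗ
      (TensorProduct.congr (decomposeLinearEquiv gV) (decomposeLinearEquiv gW)).toLinearMap
  have dec_tmul (i j : ℤ) (x : gV i) (y : gW j) :
      dec (x ⊗ₜ y) = lof ℚ ℤ (fun n => tensorGrading gV gW n) (i + j) (incl (i, j) (x ⊗ₜ y)) := by
    simp [dec, TensorProduct.directSum_lof_tmul_lof]
  refine isInternal_of_leftInverse dec ?_ fun n => tensorGrading_le
    (p := (LinearMap.range _).comap dec) ?_
  · refine TensorProduct.ext (decompose_lhom_ext gV fun i => LinearMap.ext fun x =>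
      decompose_lhom_ext gW fun j => LinearMap.ext fun y => ?_)
    change coeLinearMap _ (dec (x.1 ⊗ₜ y.1)) = x.1 ⊗ₜ y.1
    rw [dec_tmul, coeLinearMap_lof]
    rfl
  · rintro i j rfl x hx y hy
    exact ⟨_, (dec_tmul i j ⟨x, hx⟩ ⟨y, hy⟩).symm⟩

end Decomposition

section Parity

variable [Decomposition gV]

variable {gV} in
lemma parityOf_of_mem {n : ℤ} {x : V} (hx : x ∈ gV n) : parityOf gV x = (-1 : ℚ) ^ n • x := by
  lift x to gV n using hx
  simp [parityOf, signOpOf]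

lemma parityOf_parityOf (x : V) : parityOf gV (parityOf gV x) = x := by
  suffices parityOf gV ∘ₗ parityOf gV = LinearMap.id from LinearMap.congr_fun this x
  refine decompose_lhom_ext gV fun n => LinearMap.ext fun x => ?_
  simp [parityOf_of_mem x.2, smul_smul, ← mul_zpow]

variable {gV gW} in
lemma map_parityOf_of_mem [Decomposition gW] {n : ℤ} {z : V ⊗[ℚ] W}
    (hz : z ∈ tensorGrading gV gW n) :
    TensorProduct.map (parityOf gV) (parityOf gW) z = (-1 : ℚ) ^ n • z := by
  suffices tensorGrading gV gW n ≤ LinearMap.eqLocus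
      (TensorProduct.map (parityOf gV) (parityOf gW)) ((-1 : ℚ) ^ n • LinearMap.id) from this hz
  refine tensorGrading_le fun i j hij x hx y hy => ?_
  simp [parityOf_of_mem hx, parityOf_of_mem hy, ← TensorProduct.smul_tmul', smul_smul, ← hij,
    zpow_add₀, mul_comm]

end Parity

end Gradings

lemma isQuasiIso_of_deformationRetract {V W : Type} [AddCommGroup V] [Module ℚ V]
    [AddCommGroup W] [Module ℚ W] {dV : V →ₗ[ℚ] V} {dW : W →ₗ[ℚ] W} {f : V →ₗ[ℚ] W}
    {r : W →ₗ[ℚ] V} {s : W →ₗ[ℚ] W} (hrf : r ∘ₗ f = LinearMap.id) (hr : r ∘ₗ dW = dV ∘ₗ r)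
    (hs : dW ∘ₗ s + s ∘ₗ dW = LinearMap.id - f ∘ₗ r) : IsQuasiIso dV dW f := by
  refine ⟨fun x _ ⟨y, hy⟩ => ⟨r y, ?_⟩, fun w hw => ⟨r w, ?_, s w, ?_⟩⟩
  · calc x = r (f x) := (LinearMap.congr_fun hrf x).symm
      _ = r (dW y) := by rw [hy]
      _ = dV (r y) := LinearMap.congr_fun hr y
  · calc dV (r w) = r (dW w) := (LinearMap.congr_fun hr w).symm
      _ = 0 := by rw [hw, map_zero]
  · calc w - f (r w) = dW (s w) + s (dW w) := (LinearMap.congr_fun hs w).symm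
      _ = dW (s w) := by rw [hw, map_zero, add_zero]

namespace DGVect

lemma d_d (V : DGVect) (x : V.carrier) : V.d (V.d x) = 0 :=
  LinearMap.congr_fun V.d_sq x

lemma parityOf_d (V : DGVect) (x : V.carrier) :
    parityOf V.grading (V.d x) = -V.d (parityOf V.grading x) := by
  suffices parityOf V.grading ∘ₗ V.d = -(V.d ∘ₗ parityOf V.grading) from LinearMap.congr_fun this x
  refine DirectSum.decompose_lhom_ext V.grading fun n => LinearMap.ext fun x => ?_
  simp [parityOf_of_mem (V.d_mem n x x.2), parityOf_of_mem x.2, zpow_sub_one₀]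

end DGVect

namespace DGAlgebra

variable (A : DGAlgebra)

lemma d_one : A.d A.one = 0 := by
  simpa [A.one_mul', A.mul_one'] using A.leibniz 0 A.one A.one A.one_mem

/-- The ground field `ℚ`, concentrated in degree `0`, as a dg algebra. -/
def ground : DGAlgebra where
  carrier := ℚ
  grading := Pi.single 0 ⊤
  isDecomp := (isInternal_single 0).chooseDecomposition
  d := 0
  d_mem _ _ _ := zero_mem _
  d_sq := LinearMap.comp_zero _
  mul := LinearMap.mul ℚ ℚ
  one := 1
  one_mem := by simp
  mul_mem i j x y hx hy := by
    rcases eq_or_ne i 0 with rfl | hi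
    · rcases eq_or_ne j 0 with rfl | hj
      · simp
      · simp_all
    · simp_all
  mul_assoc' := mul_assoc
  one_mul' := one_mul
  mul_one' := mul_one
  leibniz _ _ _ _ := by simp

section FreeAction

variable (V : Type) [AddCommGroup V] [Module ℚ V]

/-- The action of `A` on the free right module `V ⊗ A`, as a map out of the tensor product. -/
def freeActionMap : (V ⊗[ℚ] A.carrier) ⊗[ℚ] A.carrier →ₗ[ℚ] V ⊗[ℚ] A.carrier :=
  A.mulMap.lTensor V ∘ₗ (TensorProduct.assoc ℚ V A.carrier A.carrier).toLinearMap

variable {V}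

@[simp] lemma freeActionMap_tmul (v : V) (a b : A.carrier) :
    A.freeActionMap V ((v ⊗ₜ a) ⊗ₜ b) = v ⊗ₜ A.mul a b := rfl

lemma freeActionMap_tmul_one (z : V ⊗[ℚ] A.carrier) : A.freeActionMap V (z ⊗ₜ A.one) = z := by
  have key : A.freeActionMap V ∘ₗ (TensorProduct.mk ℚ _ _).flip A.one = LinearMap.id :=
    TensorProduct.ext' fun v a => by simp [A.mul_one']
  exact LinearMap.congr_fun key z

lemma freeActionMap_tmul_mul (z : V ⊗[ℚ] A.carrier) (a b : A.carrier) :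
    A.freeActionMap V (z ⊗ₜ A.mul a b)
      = A.freeActionMap V (A.freeActionMap V (z ⊗ₜ a) ⊗ₜ b) := by
  induction z with
  | zero => simp
  | add z w hz hw => simp only [TensorProduct.add_tmul, map_add, hz, hw]
  | tmul v c => simp [A.mul_assoc']

lemma freeActionMap_mem {gV : ℤ → Submodule ℚ V} {i j n : ℤ} {z : V ⊗[ℚ] A.carrier}
    {a : A.carrier} (hz : z ∈ tensorGrading gV A.grading i) (ha : a ∈ A.grading j)
    (hn : i + j = n) : A.freeActionMap V (z ⊗ₜ a) ∈ tensorGrading gV A.grading n := by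
  refine tensorGrading_le (p := (tensorGrading gV A.grading n).comap
    (A.freeActionMap V ∘ₗ (TensorProduct.mk ℚ _ _).flip a)) (fun k l hkl v hv b hb => ?_) hz
  exact tmul_mem_tensorGrading hv (A.mul_mem l j b a hb ha) (by lia)

lemma freeActionMap_comp_map_lTensor {U U' : Type} [AddCommGroup U] [Module ℚ U]
    [AddCommGroup U'] [Module ℚ U'] (f : U →ₗ[ℚ] A.carrier) (g : U' →ₗ[ℚ] A.carrier) :
    A.freeActionMap V ∘ₗ TensorProduct.map (f.lTensor V) g
      = (A.mulMap ∘ₗ TensorProduct.map f g).lTensor V ∘ₗ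
          (TensorProduct.assoc ℚ V U U').toLinearMap :=
  TensorProduct.ext_threefold fun _ _ _ => rfl

end FreeAction

end DGAlgebra

/-- The composite of dg algebra maps. -/
def DGAlgebraHom.comp {A B E : DGAlgebra} (G : DGAlgebraHom B E) (F : DGAlgebraHom A B) :
    DGAlgebraHom A E where
  toLinearMap := G.toLinearMap ∘ₗ F.toLinearMap
  mem n a ha := G.mem n _ (F.mem n a ha)
  chain := by rw [LinearMap.comp_assoc, F.chain, ← LinearMap.comp_assoc, G.chain,
    LinearMap.comp_assoc]
  map_one := by simp [F.map_one, G.map_one]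
  map_mul a b := by simp [F.map_mul, G.map_mul]

namespace DGCoalgebra

variable (C : DGCoalgebra)

lemma counit_d (c : C.carrier) : C.counit (C.d c) = 0 :=
  LinearMap.congr_fun C.counit_chain c

lemma counit_parityOf (c : C.carrier) : C.counit (parityOf C.grading c) = C.counit c := by
  suffices C.counit ∘ₗ parityOf C.grading = C.counit from LinearMap.congr_fun this c
  refine DirectSum.decompose_lhom_ext C.grading fun n => LinearMap.ext fun x => ?_
  rcases eq_or_ne n 0 with rfl | hn
  · simp [parityOf_of_mem x.2]
  · simp [parityOf_of_mem x.2, C.counit_zero n hn x x.2]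

lemma comul_comp_parityOf :
    C.comul ∘ₗ parityOf C.grading
      = TensorProduct.map (parityOf C.grading) (parityOf C.grading) ∘ₗ C.comul := by
  refine DirectSum.decompose_lhom_ext C.grading fun n => LinearMap.ext fun c => ?_
  simp [parityOf_of_mem c.2, map_parityOf_of_mem (C.comul_mem n c c.2)]

lemma rTensor_counit_comul (c : C.carrier) :
    C.counit.rTensor C.carrier (C.comul c) = 1 ⊗ₜ c := by
  have h := LinearMap.congr_fun C.counit_comul_left c
  exact (TensorProduct.lid ℚ C.carrier).injective (h.trans (by simp))

end DGCoalgebra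

lemma CoaugDGCoalgebra.d_one (C : CoaugDGCoalgebra) : C.d C.one = 0 := by
  simpa [C.nonneg] using C.d_mem 0 C.one C.one_mem

/-- A right dg module over a dg algebra. -/
structure RightDGModule (A : DGAlgebra) extends DGVect where
  act : carrier →ₗ[ℚ] A.carrier →ₗ[ℚ] carrier
  act_mem : ∀ (i j : ℤ) (x : carrier) (a : A.carrier), x ∈ grading i → a ∈ A.grading j →
    act x a ∈ grading (i + j)
  act_one : ∀ x : carrier, act x A.one = x
  act_mul : ∀ (x : carrier) (a b : A.carrier), act x (A.mul a b) = act (act x a) b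
  leibniz : ∀ (i : ℤ) (x : carrier) (a : A.carrier), x ∈ grading i →
    d (act x a) = act (d x) a + ((-1 : ℚ) ^ i) • act x (A.d a)

namespace TwistingChain

variable {C : DGCoalgebra} {A : DGAlgebra} (τ : TwistingChain C A)

lemma mulMap_comp_map_comp_comul :
    A.mulMap ∘ₗ TensorProduct.map (τ.toFun ∘ₗ parityOf C.grading) τ.toFun ∘ₗ C.comul
      = -(A.d ∘ₗ τ.toFun + τ.toFun ∘ₗ C.d) :=
  eq_neg_of_add_eq_zero_right τ.twist

/-- The twisting term `c ↦ (-1)^{|c₍₀₎|} c₍₀₎ ⊗ τ(c₍₁₎)` of the differential of `C ⊗^τ A`. -/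
def coextTwist : C.carrier →ₗ[ℚ] C.carrier ⊗[ℚ] A.carrier :=
  TensorProduct.map (parityOf C.grading) τ.toFun ∘ₗ C.comul

/-- The differential of the twisted coextension `C ⊗^τ A` of `A` regarded as a left module
over itself. -/
abbrev coextD : C.carrier ⊗[ℚ] A.carrier →ₗ[ℚ] C.carrier ⊗[ℚ] A.carrier :=
  coextDiff C A τ A.carrier A.d A.mulMap

lemma coextD_tmul (c : C.carrier) (a : A.carrier) :
    τ.coextD (c ⊗ₜ a) = C.d c ⊗ₜ a + parityOf C.grading c ⊗ₜ A.d a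
      + A.freeActionMap C.carrier (τ.coextTwist c ⊗ₜ a) := by
  have key : TensorProduct.map (parityOf C.grading)
        (A.mulMap ∘ₗ TensorProduct.map τ.toFun LinearMap.id) ∘ₗ
        (TensorProduct.assoc ℚ C.carrier C.carrier A.carrier).toLinearMap
      = A.freeActionMap C.carrier ∘ₗ
        (TensorProduct.map (parityOf C.grading) τ.toFun).rTensor A.carrier :=
    TensorProduct.ext_threefold fun _ _ _ => rfl
  exact congrArg _ (LinearMap.congr_fun key (C.comul c ⊗ₜ a))

lemma coextD_tmul_one (c : C.carrier) :
    τ.coextD (c ⊗ₜ A.one) = C.d c ⊗ₜ A.one + τ.coextTwist c := by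
  simp [coextD_tmul, A.d_one, A.freeActionMap_tmul_one]

lemma coextTwist_comp_parityOf :
    τ.coextTwist ∘ₗ parityOf C.grading
      = (τ.toFun ∘ₗ parityOf C.grading).lTensor C.carrier ∘ₗ C.comul := by
  rw [coextTwist, LinearMap.comp_assoc, C.comul_comp_parityOf, ← LinearMap.comp_assoc,
    ← TensorProduct.map_comp, LinearMap.lTensor]
  congr 2
  exact LinearMap.ext (parityOf_parityOf C.grading)

lemma coextTwist_comp_d :
    τ.coextTwist ∘ₗ C.d = ((τ.toFun ∘ₗ C.d).lTensor C.carrier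
      - TensorProduct.map (C.d ∘ₗ parityOf C.grading) τ.toFun) ∘ₗ C.comul := by
  have key : TensorProduct.map (parityOf C.grading) τ.toFun ∘ₗ
        (TensorProduct.map C.d LinearMap.id + TensorProduct.map (parityOf C.grading) C.d)
      = (τ.toFun ∘ₗ C.d).lTensor C.carrier
        - TensorProduct.map (C.d ∘ₗ parityOf C.grading) τ.toFun :=
    TensorProduct.ext' fun x y => by
      simp [C.parityOf_d, parityOf_parityOf, TensorProduct.neg_tmul, neg_add_eq_sub]
  rw [coextTwist, LinearMap.comp_assoc, C.comul_chain, ← LinearMap.comp_assoc, key]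

lemma coextD_comp_map_parityOf :
    τ.coextD ∘ₗ TensorProduct.map (parityOf C.grading) τ.toFun
      = TensorProduct.map (C.d ∘ₗ parityOf C.grading) τ.toFun
        + (A.d ∘ₗ τ.toFun).lTensor C.carrier
        + A.freeActionMap C.carrier ∘ₗ
            TensorProduct.map (τ.coextTwist ∘ₗ parityOf C.grading) τ.toFun :=
  TensorProduct.ext' fun x y => by simp [coextD_tmul, parityOf_parityOf]

lemma freeActionMap_comp_map_coextTwist :
    A.freeActionMap C.carrier ∘ₗ
        TensorProduct.map (τ.coextTwist ∘ₗ parityOf C.grading) τ.toFun ∘ₗ C.comul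
      = -((A.d ∘ₗ τ.toFun + τ.toFun ∘ₗ C.d).lTensor C.carrier ∘ₗ C.comul) := by
  have hsplit : TensorProduct.map (τ.coextTwist ∘ₗ parityOf C.grading) τ.toFun
      = TensorProduct.map ((τ.toFun ∘ₗ parityOf C.grading).lTensor C.carrier) τ.toFun ∘ₗ
          TensorProduct.map C.comul LinearMap.id := by
    rw [coextTwist_comp_parityOf, ← TensorProduct.map_comp, LinearMap.comp_id]
  rw [hsplit, ← LinearMap.comp_assoc, ← LinearMap.comp_assoc, A.freeActionMap_comp_map_lTensor,
    LinearMap.comp_assoc, LinearMap.comp_assoc, C.coassoc, ← LinearMap.comp_assoc]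
  change LinearMap.lTensor _ _ ∘ₗ LinearMap.lTensor _ _ ∘ₗ _ = _
  rw [← LinearMap.comp_assoc, ← LinearMap.lTensor_comp, LinearMap.comp_assoc,
    mulMap_comp_map_comp_comul, LinearMap.lTensor_neg, LinearMap.neg_comp]

lemma coextD_coextD_tmul_one (c : C.carrier) : τ.coextD (τ.coextD (c ⊗ₜ A.one)) = 0 := by
  have hφd : τ.coextTwist (C.d c) = (τ.toFun ∘ₗ C.d).lTensor C.carrier (C.comul c)
      - TensorProduct.map (C.d ∘ₗ parityOf C.grading) τ.toFun (C.comul c) :=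
    LinearMap.congr_fun τ.coextTwist_comp_d c
  have hDφ : τ.coextD (τ.coextTwist c)
      = TensorProduct.map (C.d ∘ₗ parityOf C.grading) τ.toFun (C.comul c)
        + (A.d ∘ₗ τ.toFun).lTensor C.carrier (C.comul c)
        + A.freeActionMap C.carrier
            (TensorProduct.map (τ.coextTwist ∘ₗ parityOf C.grading) τ.toFun (C.comul c)) :=
    LinearMap.congr_fun τ.coextD_comp_map_parityOf (C.comul c)
  have hφφ : A.freeActionMap C.carrier
        (TensorProduct.map (τ.coextTwist ∘ₗ parityOf C.grading) τ.toFun (C.comul c))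
      = -((A.d ∘ₗ τ.toFun + τ.toFun ∘ₗ C.d).lTensor C.carrier (C.comul c)) :=
    LinearMap.congr_fun τ.freeActionMap_comp_map_coextTwist c
  rw [coextD_tmul_one, map_add, coextD_tmul_one, C.d_d, hφd, hDφ, hφφ, LinearMap.lTensor_add,
    LinearMap.add_apply, TensorProduct.zero_tmul]
  abel

lemma coextTwist_mem {n : ℤ} {c : C.carrier} (hc : c ∈ C.grading n) :
    τ.coextTwist c ∈ tensorGrading C.grading A.grading (n - 1) := by
  refine tensorGrading_le (p := (tensorGrading C.grading A.grading (n - 1)).comap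
    (TensorProduct.map (parityOf C.grading) τ.toFun)) (fun i j hij x hx y hy => ?_)
    (C.comul_mem n c hc)
  simpa only [Submodule.mem_comap, TensorProduct.map_tmul, parityOf_of_mem hx] using
    tmul_mem_tensorGrading (Submodule.smul_mem _ _ hx) (τ.mem j y hy) (by lia)

lemma coextD_mem {n : ℤ} {z : C.carrier ⊗[ℚ] A.carrier}
    (hz : z ∈ tensorGrading C.grading A.grading n) :
    τ.coextD z ∈ tensorGrading C.grading A.grading (n - 1) := by
  refine tensorGrading_le (p := (tensorGrading C.grading A.grading (n - 1)).comap τ.coextD)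
    (fun i j hij c hc a ha => ?_) hz
  rw [Submodule.mem_comap, coextD_tmul, parityOf_of_mem hc]
  refine add_mem (add_mem ?_ ?_) ?_
  · exact tmul_mem_tensorGrading (C.d_mem i c hc) ha (by lia)
  · exact tmul_mem_tensorGrading (Submodule.smul_mem _ _ hc) (A.d_mem j a ha) (by lia)
  · exact A.freeActionMap_mem (τ.coextTwist_mem hc) ha (by lia)

lemma coextD_freeActionMap {n : ℤ} {z : C.carrier ⊗[ℚ] A.carrier} {a : A.carrier}
    (hz : z ∈ tensorGrading C.grading A.grading n) :
    τ.coextD (A.freeActionMap C.carrier (z ⊗ₜ a))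
      = A.freeActionMap C.carrier (τ.coextD z ⊗ₜ a)
        + (-1 : ℚ) ^ n • A.freeActionMap C.carrier (z ⊗ₜ A.d a) := by
  refine tensorGrading_le (p := LinearMap.eqLocus
    (τ.coextD ∘ₗ A.freeActionMap C.carrier ∘ₗ (TensorProduct.mk ℚ _ _).flip a)
    (A.freeActionMap C.carrier ∘ₗ (TensorProduct.mk ℚ _ _).flip a ∘ₗ τ.coextD
      + (-1 : ℚ) ^ n • A.freeActionMap C.carrier ∘ₗ (TensorProduct.mk ℚ _ _).flip (A.d a)))
    (fun i j hij c hc b hb => ?_) hz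
  simp only [LinearMap.mem_eqLocus, LinearMap.comp_apply, LinearMap.add_apply, LinearMap.smul_apply,
    LinearMap.flip_apply, TensorProduct.mk_apply, A.freeActionMap_tmul, A.freeActionMap_tmul_mul,
    coextD_tmul, parityOf_of_mem hc, A.leibniz j b a hb, TensorProduct.tmul_add,
    TensorProduct.tmul_smul, ← TensorProduct.smul_tmul', map_add, map_smul, smul_smul, ← hij,
    zpow_add₀ (neg_ne_zero.2 one_ne_zero : (-1 : ℚ) ≠ 0), mul_comm ((-1 : ℚ) ^ i)]
  abel

lemma coextD_comp_coextD : τ.coextD ∘ₗ τ.coextD = 0 := by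
  -- `d²` commutes with the right action of `A`, so it vanishes once it does on all `c ⊗ 1`
  refine TensorProduct.ext (DirectSum.decompose_lhom_ext C.grading fun n =>
    LinearMap.ext fun c => LinearMap.ext fun a => ?_)
  have hc : (c : C.carrier) ⊗ₜ A.one ∈ tensorGrading C.grading A.grading n :=
    tmul_mem_tensorGrading c.2 A.one_mem (add_zero n)
  have hca : (c : C.carrier) ⊗ₜ a = A.freeActionMap C.carrier ((c ⊗ₜ A.one) ⊗ₜ a) := by
    simp [A.one_mul']
  change τ.coextD (τ.coextD (c ⊗ₜ a)) = 0
  rw [hca, τ.coextD_freeActionMap hc, map_add, map_smul,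
    τ.coextD_freeActionMap (τ.coextD_mem hc), τ.coextD_freeActionMap hc, A.d_d,
    coextD_coextD_tmul_one]
  simp [zpow_sub_one₀]

/-- The twisted coextension `C ⊗^τ A` as a right dg module: right multiplication on the second
factor commutes with the left multiplication by which the differential twists. -/
def coext : RightDGModule A where
  carrier := C.carrier ⊗[ℚ] A.carrier
  grading := tensorGrading C.grading A.grading
  isDecomp := (isInternal_tensorGrading C.grading A.grading).chooseDecomposition
  d := τ.coextD
  d_mem _ _ := τ.coextD_mem
  d_sq := τ.coextD_comp_coextD
  act := TensorProduct.curry (A.freeActionMap C.carrier)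
  act_mem _ _ _ _ hz ha := A.freeActionMap_mem hz ha rfl
  act_one := A.freeActionMap_tmul_one
  act_mul := A.freeActionMap_tmul_mul
  leibniz _ _ _ hz := τ.coextD_freeActionMap hz

lemma lift_coext_act : TensorProduct.lift τ.coext.act = A.freeActionMap C.carrier :=
  TensorProduct.ext' fun _ _ => rfl

end TwistingChain

/-- An augmentation of a dg algebra: a dg algebra map to the ground field, stated as conditions
on a `ℚ`-valued functional. -/
structure Augmentation (A : DGAlgebra) where
  toLinearMap : A.carrier →ₗ[ℚ] ℚ
  map_of_ne_zero : ∀ n : ℤ, n ≠ 0 → ∀ a ∈ A.grading n, toLinearMap a = 0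
  map_d : ∀ a, toLinearMap (A.d a) = 0
  map_one : toLinearMap A.one = 1
  map_mul : ∀ a b, toLinearMap (A.mul a b) = toLinearMap a * toLinearMap b

namespace Augmentation

variable {A : DGAlgebra}

instance : CoeFun (Augmentation A) fun _ => A.carrier → ℚ := ⟨fun ε => ε.toLinearMap⟩

/-- The augmentation underlying a dg algebra map to the ground field. -/
def ofHom (F : DGAlgebraHom A DGAlgebra.ground) : Augmentation A where
  toLinearMap := F.toLinearMap
  map_of_ne_zero n hn a ha := by
    have h : F.toLinearMap a ∈ (Pi.single 0 ⊤ : ℤ → Submodule ℚ ℚ) n := F.mem n a ha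
    rwa [Pi.single_eq_of_ne hn] at h
  map_d := LinearMap.congr_fun F.chain
  map_one := F.map_one
  map_mul := F.map_mul

lemma neg_one_zpow_mul (ε : Augmentation A) {n : ℤ} {a : A.carrier} (ha : a ∈ A.grading n) :
    (-1 : ℚ) ^ n * ε a = ε a := by
  rcases eq_or_ne n 0 with rfl | hn
  · simp
  · simp [ε.map_of_ne_zero n hn a ha]

lemma smul_mem (ε : Augmentation A) {V : Type} [AddCommGroup V] [Module ℚ V]
    {g : ℤ → Submodule ℚ V} {i j : ℤ} {a : A.carrier} {x : V} (ha : a ∈ A.grading i)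
    (hx : x ∈ g j) : ε a • x ∈ g (i + j) := by
  rcases eq_or_ne i 0 with rfl | hi
  · simpa using Submodule.smul_mem _ _ hx
  · simp [ε.map_of_ne_zero i hi a ha]

end Augmentation

namespace RightDGModule

variable {A : DGAlgebra} (M : RightDGModule A) (ε : Augmentation A)

/-- The inner `(ε, id)`-derivation `a ↦ z·a - ε(a)z` of `A` with values in a right dg module. -/
def innerDerivation (z : M.carrier) : A.carrier →ₗ[ℚ] M.carrier :=
  M.act z - ε.toLinearMap.smulRight z

lemma innerDerivation_apply (z : M.carrier) (a : A.carrier) :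
    M.innerDerivation ε z a = M.act z a - ε a • z := rfl

lemma innerDerivation_mul (z : M.carrier) (a b : A.carrier) :
    M.innerDerivation ε z (A.mul a b)
      = ε a • M.innerDerivation ε z b + M.act (M.innerDerivation ε z a) b := by
  simp only [innerDerivation_apply, M.act_mul, ε.map_mul, map_sub, map_smul, LinearMap.sub_apply,
    LinearMap.smul_apply, smul_sub, smul_smul]
  abel

variable {M} in
lemma innerDerivation_mem {z : M.carrier} (hz : z ∈ M.grading 0) {n : ℤ} {a : A.carrier}
    (ha : a ∈ A.grading n) : M.innerDerivation ε z a ∈ M.grading n := by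
  refine sub_mem ?_ ?_
  · simpa using M.act_mem 0 n z a hz ha
  · simpa using ε.smul_mem ha hz

variable {M} in
lemma d_innerDerivation {z : M.carrier} (hz : z ∈ M.grading 0) (dz : M.d z = 0) (a : A.carrier) :
    M.d (M.innerDerivation ε z a) = M.innerDerivation ε z (A.d a) := by
  simp [innerDerivation_apply, M.leibniz 0 z a hz, dz, ε.map_d]

/-- The product `(a, m)(b, n) = (ab, ε(a)n + m·b)` on `A × M`. -/
def squareZeroMul :
    A.carrier × M.carrier →ₗ[ℚ] A.carrier × M.carrier →ₗ[ℚ] A.carrier × M.carrier :=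
  LinearMap.mk₂ ℚ (fun x y => (A.mul x.1 y.1, ε x.1 • y.2 + M.act x.2 y.1))
    (fun x x' y => by ext1 <;> simp [add_smul, add_add_add_comm])
    (fun c x y => by ext1 <;> simp [smul_smul])
    (fun x y y' => by ext1 <;> simp [add_add_add_comm])
    (fun c x y => by ext1 <;> simp [smul_comm c])

lemma squareZeroMul_apply (x y : A.carrier × M.carrier) :
    M.squareZeroMul ε x y = (A.mul x.1 y.1, ε x.1 • y.2 + M.act x.2 y.1) := rfl

/-- The differential `d(a, m) = (da, z·a - ε(a)z - dm)` on `A × M`. -/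
def squareZeroD (z : M.carrier) : A.carrier × M.carrier →ₗ[ℚ] A.carrier × M.carrier :=
  (A.d ∘ₗ LinearMap.fst ℚ _ _).prod ((M.innerDerivation ε z).coprod (-M.d))

lemma squareZeroD_apply (z : M.carrier) (x : A.carrier × M.carrier) :
    M.squareZeroD ε z x = (A.d x.1, M.innerDerivation ε z x.1 - M.d x.2) := by
  simp [squareZeroD, sub_eq_add_neg]

/-- The square-zero extension of `A` by the shifted bimodule `M[1]`, where `M[1]ₙ = Mₙ₊₁` and `A`
acts on the left through `ε`, with differential twisted by the inner derivation of a cycle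
`z ∈ M₀`. -/
def squareZero {z : M.carrier} (hz : z ∈ M.grading 0) (dz : M.d z = 0) : DGAlgebra where
  carrier := A.carrier × M.carrier
  grading n := (A.grading n).prod (M.grading (n + 1))
  isDecomp :=
    letI := (isInternal_comp_equiv (DirectSum.Decomposition.isInternal M.grading)
      (Equiv.addRight (1 : ℤ))).chooseDecomposition
    (isInternal_prod A.grading (M.grading ∘ Equiv.addRight 1)).chooseDecomposition
  d := M.squareZeroD ε z
  d_mem n x hx := by
    rw [squareZeroD_apply, Submodule.mem_prod, sub_add_cancel]
    refine ⟨A.d_mem n _ hx.1, sub_mem (innerDerivation_mem ε hz hx.1) ?_⟩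
    simpa using M.d_mem (n + 1) _ hx.2
  d_sq := LinearMap.ext fun x => by
    simp [squareZeroD_apply, d_innerDerivation ε hz dz, A.d_d, M.d_d]
  mul := M.squareZeroMul ε
  one := (A.one, 0)
  one_mem := ⟨A.one_mem, zero_mem _⟩
  mul_mem i j x y hx hy := by
    refine ⟨A.mul_mem i j _ _ hx.1 hy.1, add_mem ?_ ?_⟩
    · simpa [add_assoc] using ε.smul_mem hx.1 hy.2
    · simpa [add_right_comm] using M.act_mem _ _ _ _ hx.2 hy.1
  mul_assoc' x y w := by
    simp [squareZeroMul_apply, A.mul_assoc', ε.map_mul, M.act_mul, smul_smul, add_assoc]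
  one_mul' x := by simp [squareZeroMul_apply, A.one_mul', ε.map_one]
  mul_one' x := by simp [squareZeroMul_apply, A.mul_one', M.act_one]
  leibniz i x y hx := by
    simp only [squareZeroMul_apply, squareZeroD_apply, A.leibniz i _ _ hx.1, innerDerivation_mul,
      M.leibniz (i + 1) _ _ hx.2, ε.map_d, map_add, map_sub, map_smul, LinearMap.sub_apply,
      Prod.smul_mk, Prod.mk_add_mk, smul_add, smul_sub, smul_smul, ε.neg_one_zpow_mul hx.1]
    refine Prod.ext rfl ?_
    simp only [zpow_add_one₀ (neg_ne_zero.2 one_ne_zero : (-1 : ℚ) ≠ 0), mul_neg_one, neg_smul,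
      zero_smul, zero_add]
    abel

variable {M} in
/-- The projection of the square-zero extension onto `A`. -/
def squareZeroFst {z : M.carrier} (hz : z ∈ M.grading 0) (dz : M.d z = 0) :
    DGAlgebraHom (M.squareZero ε hz dz) A where
  toLinearMap := LinearMap.fst ℚ A.carrier M.carrier
  mem _ _ hx := hx.1
  chain := LinearMap.ext fun x => congrArg Prod.fst (M.squareZeroD_apply ε z x)
  map_one := rfl
  map_mul _ _ := rfl

end RightDGModule

namespace TwistingChain

variable {C : DGCoalgebra} {A : DGAlgebra} (τ : TwistingChain C A)

/-- The lift `c ↦ (τ(c), q(c))` of a twisting chain to a square-zero extension; `dq` is the second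
component of its twisting equation. -/
def squareZeroLift {ε : Augmentation A} (hτ : ∀ c, ε (τ.toFun c) = 0) {M : RightDGModule A}
    {z : M.carrier} (hz : z ∈ M.grading 0) (dz : M.d z = 0) (q : C.carrier →ₗ[ℚ] M.carrier)
    (hq : ∀ n, ∀ c ∈ C.grading n, q c ∈ M.grading n)
    (dq : ∀ c, M.d (q c) = q (C.d c) + M.act z (τ.toFun c) + TensorProduct.lift M.act
      (TensorProduct.map (q ∘ₗ parityOf C.grading) τ.toFun (C.comul c))) :
    TwistingChain C (M.squareZero ε hz dz) where
  toFun := τ.toFun.prod q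
  mem n c hc := ⟨τ.mem n c hc, by
    rw [sub_add_cancel]
    exact hq n c hc⟩
  twist := by
    have hmul : TensorProduct.lift (M.squareZeroMul ε) ∘ₗ
          TensorProduct.map (τ.toFun.prod q ∘ₗ parityOf C.grading) (τ.toFun.prod q)
        = (A.mulMap ∘ₗ TensorProduct.map (τ.toFun ∘ₗ parityOf C.grading) τ.toFun).prod
          (TensorProduct.lift M.act ∘ₗ TensorProduct.map (q ∘ₗ parityOf C.grading) τ.toFun) :=
      TensorProduct.ext' fun x y => by
        simp [RightDGModule.squareZeroMul_apply, DGAlgebra.mulMap, hτ]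
    refine LinearMap.ext fun c => ?_
    have hc := LinearMap.congr_fun hmul (C.comul c)
    change M.squareZeroD ε z (τ.toFun c, q c) + (τ.toFun (C.d c), q (C.d c))
      + (TensorProduct.lift (M.squareZeroMul ε) ∘ₗ
          TensorProduct.map (τ.toFun.prod q ∘ₗ parityOf C.grading) (τ.toFun.prod q)) (C.comul c) = 0
    rw [hc, M.squareZeroD_apply]
    refine Prod.ext (LinearMap.congr_fun τ.twist c) ?_
    simp only [RightDGModule.innerDerivation_apply, hτ, dq, zero_smul, sub_zero, Prod.mk_add_mk,
      LinearMap.prod_apply, LinearMap.comp_apply, Function.prod_apply, Prod.snd_zero]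
    abel

end TwistingChain

namespace CobarData

variable {C : CoaugDGCoalgebra} (Ω : CobarData C)

lemma exists_augmentation : ∃ ε : Augmentation Ω.alg, ∀ c, ε (Ω.t.toFun c) = 0 := by
  let τ : TwistingChain C.toDGCoalgebra DGAlgebra.ground :=
    { toFun := 0
      mem := fun _ _ _ => zero_mem _
      twist := by simp }
  obtain ⟨F, hF, -⟩ := Ω.univ DGAlgebra.ground τ rfl
  exact ⟨.ofHom F, LinearMap.congr_fun hF⟩

lemma hom_eq_id (F : DGAlgebraHom Ω.alg Ω.alg) (hF : F.toLinearMap ∘ₗ Ω.t.toFun = Ω.t.toFun) :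
    F.toLinearMap = LinearMap.id :=
  congrArg DGAlgebraHom.toLinearMap <| (Ω.univ Ω.alg Ω.t Ω.t_one).unique hF
    (y₂ := ⟨LinearMap.id, fun _ _ => id, rfl, rfl, fun _ _ => rfl⟩) rfl

lemma exists_derivation {ε : Augmentation Ω.alg} (hε : ∀ c, ε (Ω.t.toFun c) = 0)
    {M : RightDGModule Ω.alg} {z : M.carrier} (hz : z ∈ M.grading 0) (dz : M.d z = 0)
    (q : C.carrier →ₗ[ℚ] M.carrier) (q_one : q C.one = 0)
    (hq : ∀ n, ∀ c ∈ C.grading n, q c ∈ M.grading n)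
    (dq : ∀ c, M.d (q c) = q (C.d c) + M.act z (Ω.t.toFun c) + TensorProduct.lift M.act
      (TensorProduct.map (q ∘ₗ parityOf C.grading) Ω.t.toFun (C.comul c))) :
    ∃ σ : Ω.alg.carrier →ₗ[ℚ] M.carrier,
      (∀ c, σ (Ω.t.toFun c) = q c) ∧
      (∀ a b, σ (Ω.alg.mul a b) = ε a • σ b + M.act (σ a) b) ∧
      (∀ a, M.d (σ a) + σ (Ω.alg.d a) = M.act z a - ε a • z) := by
  obtain ⟨F, hF, -⟩ := Ω.univ _ (Ω.t.squareZeroLift hε hz dz q hq dq) (Prod.ext Ω.t_one q_one)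
  let f : Ω.alg.carrier →ₗ[ℚ] Ω.alg.carrier × M.carrier := F.toLinearMap
  have hft (c : C.carrier) : f (Ω.t.toFun c) = (Ω.t.toFun c, q c) := LinearMap.congr_fun hF c
  have hfst (a : Ω.alg.carrier) : (f a).1 = a :=
    LinearMap.congr_fun (Ω.hom_eq_id ((RightDGModule.squareZeroFst ε hz dz).comp F)
      (LinearMap.ext fun c => congrArg Prod.fst (hft c))) a
  have hfmul (a b : Ω.alg.carrier) : f (Ω.alg.mul a b) = M.squareZeroMul ε (f a) (f b) :=
    F.map_mul a b
  have hfd (a : Ω.alg.carrier) : f (Ω.alg.d a) = M.squareZeroD ε z (f a) :=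
    LinearMap.congr_fun F.chain a
  refine ⟨LinearMap.snd ℚ _ _ ∘ₗ f, fun c => by simp [hft], fun a b => ?_, fun a => ?_⟩
  · simp [hfmul, M.squareZeroMul_apply, hfst]
  · simp [hfd, M.squareZeroD_apply, hfst, M.innerDerivation_apply]

lemma coextTwist_one : Ω.t.coextTwist C.one = 0 := by
  simp [TwistingChain.coextTwist, C.comul_one, Ω.t_one]

lemma coextD_one_tmul (a : Ω.alg.carrier) :
    Ω.t.coextD (C.one ⊗ₜ a) = C.one ⊗ₜ Ω.alg.d a := by
  simp [TwistingChain.coextD_tmul, C.d_one, Ω.coextTwist_one, parityOf_of_mem C.one_mem]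

lemma one_tmul_one_mem : C.one ⊗ₜ Ω.alg.one ∈ Ω.t.coext.grading 0 :=
  tmul_mem_tensorGrading C.one_mem Ω.alg.one_mem rfl

lemma d_one_tmul_one : Ω.t.coext.d (C.one ⊗ₜ Ω.alg.one) = 0 := by
  change Ω.t.coextD _ = 0
  rw [coextD_one_tmul, Ω.alg.d_one, TensorProduct.tmul_zero]

/-- The map `c ↦ c ⊗ 1 - ε(c) 1 ⊗ 1`: the inclusion of `C` into `C ⊗^t ΩC`, made to vanish on the
coaugmentation. -/
def reducedIncl : C.carrier →ₗ[ℚ] C.carrier ⊗[ℚ] Ω.alg.carrier :=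
  (TensorProduct.mk ℚ C.carrier Ω.alg.carrier).flip Ω.alg.one
    - C.counit.smulRight (C.one ⊗ₜ Ω.alg.one)

lemma reducedIncl_apply (c : C.carrier) :
    Ω.reducedIncl c = c ⊗ₜ Ω.alg.one - C.counit c • C.one ⊗ₜ Ω.alg.one := rfl

lemma reducedIncl_one : Ω.reducedIncl C.one = 0 := by
  simp [reducedIncl_apply, C.counit_one]

lemma reducedIncl_mem {n : ℤ} {c : C.carrier} (hc : c ∈ C.grading n) :
    Ω.reducedIncl c ∈ tensorGrading C.grading Ω.alg.grading n := by
  refine sub_mem (tmul_mem_tensorGrading hc Ω.alg.one_mem (add_zero n)) ?_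
  rcases eq_or_ne n 0 with rfl | hn
  · exact Submodule.smul_mem _ _ Ω.one_tmul_one_mem
  · simp [C.counit_zero n hn c hc]

lemma freeActionMap_reducedIncl_tmul (c : C.carrier) (a : Ω.alg.carrier) :
    Ω.alg.freeActionMap C.carrier (Ω.reducedIncl c ⊗ₜ a)
      = c ⊗ₜ a - C.counit c • C.one ⊗ₜ a := by
  simp [reducedIncl_apply, TensorProduct.sub_tmul, ← TensorProduct.smul_tmul', Ω.alg.one_mul']

lemma coextD_reducedIncl (c : C.carrier) :
    Ω.t.coextD (Ω.reducedIncl c) = Ω.reducedIncl (C.d c) + C.one ⊗ₜ Ω.t.toFun c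
      + Ω.alg.freeActionMap C.carrier (TensorProduct.map
          (Ω.reducedIncl ∘ₗ parityOf C.grading) Ω.t.toFun (C.comul c)) := by
  have key : Ω.alg.freeActionMap C.carrier ∘ₗ
        TensorProduct.map (Ω.reducedIncl ∘ₗ parityOf C.grading) Ω.t.toFun
      = TensorProduct.map (parityOf C.grading) Ω.t.toFun
        - TensorProduct.mk ℚ C.carrier Ω.alg.carrier C.one ∘ₗ Ω.t.toFun ∘ₗ
            (TensorProduct.lid ℚ C.carrier).toLinearMap ∘ₗ C.counit.rTensor C.carrier :=
    TensorProduct.ext' fun x y => by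
      simp [freeActionMap_reducedIncl_tmul, C.counit_parityOf]
  have hc := LinearMap.congr_fun key (C.comul c)
  simp only [LinearMap.comp_apply, LinearMap.sub_apply, LinearEquiv.coe_coe, C.rTensor_counit_comul,
    TensorProduct.lid_tmul, one_smul, TensorProduct.mk_apply] at hc
  rw [hc, reducedIncl_apply, reducedIncl_apply, map_sub, map_smul, coextD_one_tmul,
    TwistingChain.coextD_tmul_one, Ω.alg.d_one, C.counit_d, TwistingChain.coextTwist]
  simp

lemma exists_contraction {ε : Augmentation Ω.alg} (hε : ∀ c, ε (Ω.t.toFun c) = 0) :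
    ∃ σ : Ω.alg.carrier →ₗ[ℚ] C.carrier ⊗[ℚ] Ω.alg.carrier,
      (∀ c a, σ (Ω.alg.mul (Ω.t.toFun c) a) = c ⊗ₜ a - C.counit c • C.one ⊗ₜ a) ∧
      (∀ a, Ω.t.coextD (σ a) + σ (Ω.alg.d a) = C.one ⊗ₜ a - ε a • C.one ⊗ₜ Ω.alg.one) := by
  have act_one_tmul (a : Ω.alg.carrier) :
      Ω.t.coext.act (C.one ⊗ₜ Ω.alg.one) a = C.one ⊗ₜ[ℚ] a :=
    congrArg (C.one ⊗ₜ[ℚ] ·) (Ω.alg.one_mul' a)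
  obtain ⟨σ, hσt, hσmul, hσd⟩ := Ω.exists_derivation hε Ω.one_tmul_one_mem Ω.d_one_tmul_one
    Ω.reducedIncl Ω.reducedIncl_one (fun _ _ => Ω.reducedIncl_mem) fun c => by
      rw [act_one_tmul, TwistingChain.lift_coext_act]
      exact Ω.coextD_reducedIncl c
  refine ⟨σ, fun c a => ?_, fun a => (hσd a).trans (by rw [act_one_tmul]; rfl)⟩
  have hσc := hσmul (Ω.t.toFun c) a
  rw [hε, zero_smul, zero_add, hσt] at hσc
  exact hσc.trans (Ω.freeActionMap_reducedIncl_tmul c a)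

/-- The unit `ℚ → C ⊗^t ΩC`, `1 ↦ 1 ⊗ 1`. -/
abbrev coextUnit : ℚ →ₗ[ℚ] C.carrier ⊗[ℚ] Ω.alg.carrier :=
  LinearMap.toSpanSingleton ℚ _ (C.one ⊗ₜ Ω.alg.one)

lemma coextD_comp_coextUnit : Ω.t.coextD ∘ₗ Ω.coextUnit = 0 :=
  LinearMap.ext_ring (by simp [Ω.coextD_one_tmul, Ω.alg.d_one])

/-- The counit `c ⊗ a ↦ ε(c)ε(a)` of `C ⊗^t ΩC`, a left inverse of `1 ↦ 1 ⊗ 1`. -/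
def coextCounit (ε : Augmentation Ω.alg) : C.carrier ⊗[ℚ] Ω.alg.carrier →ₗ[ℚ] ℚ :=
  LinearMap.mul' ℚ ℚ ∘ₗ TensorProduct.map C.counit ε.toLinearMap

lemma coextCounit_tmul (ε : Augmentation Ω.alg) (c : C.carrier) (a : Ω.alg.carrier) :
    Ω.coextCounit ε (c ⊗ₜ a) = C.counit c * ε a := rfl

lemma coextCounit_comp_coextUnit (ε : Augmentation Ω.alg) :
    Ω.coextCounit ε ∘ₗ Ω.coextUnit = LinearMap.id :=
  LinearMap.ext_ring (by simp [coextCounit_tmul, C.counit_one, ε.map_one])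

lemma coextCounit_comp_coextD {ε : Augmentation Ω.alg} (hε : ∀ c, ε (Ω.t.toFun c) = 0) :
    Ω.coextCounit ε ∘ₗ Ω.t.coextD = 0 := by
  have key (a : Ω.alg.carrier) : Ω.coextCounit ε ∘ₗ Ω.alg.freeActionMap C.carrier ∘ₗ
      (TensorProduct.mk ℚ _ _).flip a ∘ₗ TensorProduct.map (parityOf C.grading) Ω.t.toFun = 0 :=
    TensorProduct.ext' fun x y => by simp [coextCounit_tmul, ε.map_mul, hε]
  refine TensorProduct.ext' fun c a => ?_
  have hc : Ω.coextCounit ε (Ω.alg.freeActionMap C.carrier (Ω.t.coextTwist c ⊗ₜ a)) = 0 :=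
    LinearMap.congr_fun (key a) (C.comul c)
  simp [TwistingChain.coextD_tmul, hc, coextCounit_tmul, C.counit_d, ε.map_d]

/-- The contracting homotopy `c ⊗ a ↦ ε(c)σ(a)` of `C ⊗^t ΩC` built from a derivation `σ` on
`ΩC`. -/
def coextHomotopy (σ : Ω.alg.carrier →ₗ[ℚ] C.carrier ⊗[ℚ] Ω.alg.carrier) :
    C.carrier ⊗[ℚ] Ω.alg.carrier →ₗ[ℚ] C.carrier ⊗[ℚ] Ω.alg.carrier :=
  (TensorProduct.lid ℚ _).toLinearMap ∘ₗ TensorProduct.map C.counit σ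

lemma coextHomotopy_tmul (σ : Ω.alg.carrier →ₗ[ℚ] C.carrier ⊗[ℚ] Ω.alg.carrier)
    (c : C.carrier) (a : Ω.alg.carrier) :
    Ω.coextHomotopy σ (c ⊗ₜ a) = C.counit c • σ a := by
  simp [coextHomotopy]

lemma coextHomotopy_freeActionMap_coextTwist
    {σ : Ω.alg.carrier →ₗ[ℚ] C.carrier ⊗[ℚ] Ω.alg.carrier} (c : C.carrier) (a : Ω.alg.carrier) :
    Ω.coextHomotopy σ (Ω.alg.freeActionMap C.carrier (Ω.t.coextTwist c ⊗ₜ a))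
      = σ (Ω.alg.mul (Ω.t.toFun c) a) := by
  have key : Ω.coextHomotopy σ ∘ₗ Ω.alg.freeActionMap C.carrier ∘ₗ
        (TensorProduct.mk ℚ _ _).flip a ∘ₗ TensorProduct.map (parityOf C.grading) Ω.t.toFun
      = σ ∘ₗ Ω.alg.mul.flip a ∘ₗ Ω.t.toFun ∘ₗ
          (TensorProduct.lid ℚ C.carrier).toLinearMap ∘ₗ C.counit.rTensor C.carrier :=
    TensorProduct.ext' fun x y => by simp [coextHomotopy_tmul, C.counit_parityOf]
  exact (LinearMap.congr_fun key (C.comul c)).trans (by simp [C.rTensor_counit_comul])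

lemma coextD_comp_coextHomotopy_add {ε : Augmentation Ω.alg}
    {σ : Ω.alg.carrier →ₗ[ℚ] C.carrier ⊗[ℚ] Ω.alg.carrier}
    (hσt : ∀ c a, σ (Ω.alg.mul (Ω.t.toFun c) a) = c ⊗ₜ a - C.counit c • C.one ⊗ₜ a)
    (hσd : ∀ a, Ω.t.coextD (σ a) + σ (Ω.alg.d a) = C.one ⊗ₜ a - ε a • C.one ⊗ₜ Ω.alg.one) :
    Ω.t.coextD ∘ₗ Ω.coextHomotopy σ + Ω.coextHomotopy σ ∘ₗ Ω.t.coextD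
      = LinearMap.id - Ω.coextUnit ∘ₗ Ω.coextCounit ε := by
  refine TensorProduct.ext' fun c a => ?_
  calc Ω.t.coextD (Ω.coextHomotopy σ (c ⊗ₜ a)) + Ω.coextHomotopy σ (Ω.t.coextD (c ⊗ₜ a))
      = C.counit c • (Ω.t.coextD (σ a) + σ (Ω.alg.d a)) + σ (Ω.alg.mul (Ω.t.toFun c) a) := by
        simp only [TwistingChain.coextD_tmul, map_add, map_smul, coextHomotopy_tmul, C.counit_d,
          C.counit_parityOf, coextHomotopy_freeActionMap_coextTwist, zero_smul, smul_add]
        abel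
    _ = c ⊗ₜ a - (C.counit c * ε a) • C.one ⊗ₜ Ω.alg.one := by
        rw [hσd, hσt, smul_sub, smul_smul]
        abel

end CobarData

theorem cobar_twisted_coextension_acyclic_general (C : CoaugDGCoalgebra) (Ω : CobarData C) :
    Ω.t.coextD ∘ₗ Ω.coextUnit = 0 ∧ IsQuasiIso 0 Ω.t.coextD Ω.coextUnit ∧
    ∃ (r : C.carrier ⊗[ℚ] Ω.alg.carrier →ₗ[ℚ] ℚ)
      (s : C.carrier ⊗[ℚ] Ω.alg.carrier →ₗ[ℚ] C.carrier ⊗[ℚ] Ω.alg.carrier),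
      r ∘ₗ Ω.coextUnit = LinearMap.id ∧ r ∘ₗ Ω.t.coextD = 0 ∧
      Ω.t.coextD ∘ₗ s + s ∘ₗ Ω.t.coextD = LinearMap.id - Ω.coextUnit ∘ₗ r := by
  obtain ⟨ε, hε⟩ := Ω.exists_augmentation
  obtain ⟨σ, hσt, hσd⟩ := Ω.exists_contraction hε
  have hs := Ω.coextD_comp_coextHomotopy_add hσt hσd
  have hrη := Ω.coextCounit_comp_coextUnit ε
  have hrD := Ω.coextCounit_comp_coextD hε
  exact ⟨Ω.coextD_comp_coextUnit, isQuasiIso_of_deformationRetract hrη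
    (hrD.trans (LinearMap.zero_comp _).symm) hs, _, _, hrη, hrD, hs⟩

/-! ## Statement 4: acyclicity of the twisted coextension `C ⊗^t ΩC` -/

/-- For a 2-reduced dg coalgebra `C` with universal twisting chain
`t : C ⇝ ΩC`, regarding `ΩC` as a module over itself, the twisted coextension
`C ⊗^t ΩC` is acyclic: the map `ℚ → C ⊗^t ΩC`, `1 ↦ 1 ⊗ 1` is a quasi-isomorphism of
chain complexes from `ℚ` concentrated in degree `0` (in fact a chain deformation
retraction onto its image). -/
theorem cobar_twisted_coextension_acyclic (C : CoaugDGCoalgebra) (hred : C.TwoReduced)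
    (Ω : CobarData C) :
    -- `1 ↦ 1 ⊗ 1` is a chain map,
    (coextDiff C.toDGCoalgebra Ω.alg Ω.t Ω.alg.carrier Ω.alg.d Ω.alg.mulMap).comp
        (LinearMap.toSpanSingleton ℚ (C.carrier ⊗[ℚ] Ω.alg.carrier)
          (C.one ⊗ₜ[ℚ] Ω.alg.one)) = 0 ∧
    -- a quasi-isomorphism,
    IsQuasiIso (0 : ℚ →ₗ[ℚ] ℚ)
      (coextDiff C.toDGCoalgebra Ω.alg Ω.t Ω.alg.carrier Ω.alg.d Ω.alg.mulMap)
      (LinearMap.toSpanSingleton ℚ (C.carrier ⊗[ℚ] Ω.alg.carrier)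
        (C.one ⊗ₜ[ℚ] Ω.alg.one)) ∧
    -- and in fact a chain deformation retraction onto its image:
    ∃ (r : C.carrier ⊗[ℚ] Ω.alg.carrier →ₗ[ℚ] ℚ)
      (s : C.carrier ⊗[ℚ] Ω.alg.carrier →ₗ[ℚ] C.carrier ⊗[ℚ] Ω.alg.carrier),
      r.comp (LinearMap.toSpanSingleton ℚ (C.carrier ⊗[ℚ] Ω.alg.carrier)
          (C.one ⊗ₜ[ℚ] Ω.alg.one)) = LinearMap.id ∧
      r.comp (coextDiff C.toDGCoalgebra Ω.alg Ω.t Ω.alg.carrier Ω.alg.d Ω.alg.mulMap)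
          = 0 ∧
      (coextDiff C.toDGCoalgebra Ω.alg Ω.t Ω.alg.carrier Ω.alg.d Ω.alg.mulMap).comp s
          + s.comp (coextDiff C.toDGCoalgebra Ω.alg Ω.t Ω.alg.carrier Ω.alg.d
              Ω.alg.mulMap)
        = LinearMap.id
          - (LinearMap.toSpanSingleton ℚ (C.carrier ⊗[ℚ] Ω.alg.carrier)
              (C.one ⊗ₜ[ℚ] Ω.alg.one)).comp r :=
  cobar_twisted_coextension_acyclic_general C Ω

end
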